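/- arXiv:2307.15211 — 3 statements merged into one kernel-verified Lean document; each statement's English description precedes it below -/
import Mathlib

section
/- Let D_1, D_2, D_3, D_4 be the four chord diagrams of order n obtained from a common configuration as described (with x inserted immediately before p, immediately after p, immediately before q, and immediately after q, respectively). Then the partial-dual genus polynomials satisfy the four-term relation: ∂Γ_{D_1}(z) − ∂Γ_{D_2}(z) + ∂Γ_{D_3}(z) − ∂Γ_{D_4}(z) = 0 as polynomials in z. Equivalently, the partial-dual genus polynomial, regarded as a polynomial-valued function on chord diagrams, is a weight system. -/
/-- Number of cycles (orbits, counting fixed points) of a self-map: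
the number of connected components of its functional graph. For a permutation
this is the number of cycles, counting fixed points. -/
noncomputable def cycles {α : Type*} (f : α → α) : ℕ :=
  Nat.card (Quot fun i j => f i = j)

-- `restrictTo σ A` agrees with `σ` on `A` and fixes everything else.
-- If `A` is the set of endpoints of a set of chords of `σ`, this is `σ_A`.
open Classical in
noncomputable def restrictTo {α : Type*} (f : α → α) (A : Set α) : α → α :=
  fun i => if i ∈ A then f i else i

/-- The rotation `i ↦ i + 1` of the `2n` points of a chord diagram. -/
def rot (n : ℕ) : ZMod (2 * n) → ZMod (2 * n) := fun i => i + 1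

/-- Genus of the partial dual of the chord diagram `σ` relative to the set of
chords whose endpoint set is the (`σ`-invariant) set `A`. -/
noncomputable def pdGenus (n : ℕ) (σ : ZMod (2 * n) → ZMod (2 * n))
    (A : Set (ZMod (2 * n))) : ℕ :=
  (n + 2 - cycles (rot n ∘ restrictTo σ A) - cycles (rot n ∘ restrictTo σ Aᶜ)) / 2

/-- Genus of the one-vertex ribbon graph of the chord diagram `σ`. -/
noncomputable def genus (n : ℕ) (σ : ZMod (2 * n) → ZMod (2 * n)) : ℕ :=
  (n + 1 - cycles (rot n ∘ σ)) / 2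

/-- The partial-dual genus polynomial `∂Γ_σ(z) = Σ_A z^{g_A(σ)}`, the sum being
over all sets `A` of chords of `σ` (encoded as `σ`-invariant subsets of the
`2n` points). -/
noncomputable def pdPoly (n : ℕ) (σ : ZMod (2 * n) → ZMod (2 * n)) : Polynomial ℤ :=
  if h : n = 0 then 1 else
    haveI : NeZero (2 * n) := ⟨by omega⟩
    ∑ A ∈ Finset.univ.filter (fun A : Finset (ZMod (2 * n)) => ∀ i ∈ A, σ i ∈ A),
      Polynomial.X ^ pdGenus n σ (↑A : Set (ZMod (2 * n)))

/-- `φ : ZMod (2n-1) → ZMod (2n)` is the cyclic-order-preserving identification of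
the `2n-1` configuration points with the complement of the inserted point `x`:
it avoids `x` and each step advances by one position on the circle, skipping `x`. -/
def IsInsertion {m N : ℕ} (φ : ZMod m → ZMod N) (x : ZMod N) : Prop :=
  φ 0 ≠ x ∧ ∀ j, φ (j + 1) = if φ j + 1 = x then φ j + 2 else φ j + 1

/-- A configuration of `2n-1` marked points on the circle: a distinguished chord
`c = {p, q}`, a distinguished unpaired point `u`, and a fixed-point-free pairing
of the remaining `2n-4` points into background chords; all encoded by the
involution `τ` whose unique fixed point is `u` and with `τ p = q`. -/
def IsConfig (n : ℕ) (τ : ZMod (2 * n - 1) → ZMod (2 * n - 1))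
    (p q u : ZMod (2 * n - 1)) : Prop :=
  Function.Involutive τ ∧ τ p = q ∧ p ≠ q ∧ τ u = u ∧ ∀ j, τ j = j → j = u

/-- `D` is the chord diagram of order `n` obtained from the configuration `τ`
by inserting the extra point `x` (via the order-preserving identification `φ`)
together with the new chord `c' = {x, u}`; all other chords are unchanged. -/
def IsInsertedDiagram (n : ℕ) (τ : ZMod (2 * n - 1) → ZMod (2 * n - 1))
    (u : ZMod (2 * n - 1)) (φ : ZMod (2 * n - 1) → ZMod (2 * n)) (x : ZMod (2 * n))
    (D : ZMod (2 * n) → ZMod (2 * n)) : Prop :=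
  IsInsertion φ x ∧ (∀ j, j ≠ u → D (φ j) = φ (τ j)) ∧ D (φ u) = x ∧ D x = φ u

/-!
Let `R₀` rotate the configuration points and fix the extra point `x`, let `T` be the involution of
a set of chords, and put `P = R₀ ∘ T`. Inserting `x` before `a` turns `P` into `swap x a ∘ P`.
Replacing `a` by `P a` does not change the number of cycles of that map: `a` is merely moved to
another arc. So if `T` pairs `p` with `q`, inserting before `p` is as good as inserting after `q`,
and vice versa; if `T` fixes `p` and `q`, inserting before either is as good as inserting after it.
The chord `c'` lies in only one of `A` and `Aᶜ`, and for the other one the position of `x` is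
irrelevant. Hence the terms belonging to each single `A` already satisfy the four-term relation.
-/

open Equiv Function Polynomial

section Cycles

variable {α β : Type*}

theorem quotMk_apply (f : α → α) (i : α) :
    Quot.mk (fun i j => f i = j) (f i) = Quot.mk (fun i j => f i = j) i :=
  (Quot.sound (r := fun i j => f i = j) rfl).symm

theorem cycles_eq_of_semiconj (e : α ≃ β) {f : α → α} {g : β → β} (h : Semiconj e f g) :
    cycles f = cycles g :=
  Nat.card_congr <| Quot.congr e fun i j => by rw [← h.eq, e.apply_eq_iff_eq]

variable [DecidableEq α]

/-- The map induced by `f` on the points other than `y`, obtained by skipping `y`; it presupposes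
that `y` is not a fixed point, for otherwise a whole cycle would be lost. -/
def bypass (f : α → α) (y : α) (hy : f y ≠ y) : {i // i ≠ y} → {i // i ≠ y} :=
  fun i => if h : f i = y then ⟨f y, hy⟩ else ⟨f i, h⟩

theorem cycles_bypass (f : α → α) {y : α} (hy : f y ≠ y) : cycles (bypass f y hy) = cycles f := by
  let skip (i : α) : Quot fun i j => bypass f y hy i = j :=
    if h : i = y then Quot.mk _ ⟨f y, hy⟩ else Quot.mk _ ⟨i, h⟩
  have mk_bypass (i : {i // i ≠ y}) :
      Quot.mk (fun i j => f i = j) (bypass f y hy i).1 = Quot.mk (fun i j => f i = j) i.1 := by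
    rw [← quotMk_apply f i.1]
    by_cases h : f i = y
    · simp only [bypass, h, dite_true, quotMk_apply]
    · simp only [bypass, h, dite_false]
  have skip_apply (i : α) : skip (f i) = skip i := by
    by_cases hi : i = y
    · simp only [skip, hi, hy, dite_true, dite_false]
    · simp only [skip, hi, dite_false]
      rw [← quotMk_apply (bypass f y hy) ⟨i, hi⟩]
      by_cases h : f i = y <;> simp only [bypass, h, dite_true, dite_false]
  refine Nat.card_congr
    { toFun := Quot.lift (fun i => Quot.mk _ i.1) fun i _ h => by rw [← h, mk_bypass]
      invFun := Quot.lift skip fun i _ h => by rw [← h, skip_apply]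
      left_inv := ?_
      right_inv := ?_ }
  · rintro ⟨i, hi⟩
    exact dif_neg hi
  · rintro ⟨i⟩
    by_cases hi : i = y
    · simp only [skip, hi, dite_true, quotMk_apply]
    · simp only [skip, hi, dite_false]

theorem cycles_eq_of_bypass_eq {f g : α → α} {y : α} (hf : f y ≠ y) (hg : g y ≠ y)
    (h : bypass f y hf = bypass g y hg) : cycles f = cycles g := by
  rw [← cycles_bypass f hf, h, cycles_bypass]

theorem cycles_swap_comp_apply {f : α → α} (hf : Injective f) {a b : α} (hb : b ≠ a)
    (hfb : f b ≠ a) : cycles (swap a (f b) ∘ f) = cycles (swap a b ∘ f) := by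
  by_cases hfix : f b = b
  · rw [hfix]
  refine cycles_eq_of_bypass_eq (y := b) (by simpa using hb.symm)
    (by simpa [swap_apply_of_ne_of_ne hfb hfix]) (funext fun ⟨i, hi⟩ => ?_)
  have hfi : f i ≠ f b := hf.ne hi
  -- Both maps, skipping `b`, send the preimage of `a` to `f b`, the preimage of `b` to `a`, and any
  -- other point `i` to `f i`.
  grind [bypass]

theorem cycles_swap_comp_of_fixed {f : α → α} (hf : Injective f) {a b c : α} (ha : f a = a)
    (hb : b ≠ a) (hc : c ≠ a) : cycles (swap a b ∘ f) = cycles (swap a c ∘ f) := by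
  have hne {i : α} (hi : i ≠ a) : f i ≠ a := fun h => hi (hf (h.trans ha.symm))
  have hswap {d : α} (hd : d ≠ a) : (swap a d ∘ f) a ≠ a := by simpa [ha]
  have bypass_eq {d : α} (hd : d ≠ a) :
      bypass (swap a d ∘ f) a (hswap hd) = fun i => ⟨f i, hne i.2⟩ :=
    funext fun ⟨i, hi⟩ => by grind [bypass]
  exact cycles_eq_of_bypass_eq (hswap hb) (hswap hc) ((bypass_eq hb).trans (bypass_eq hc).symm)

end Cycles

section RestrictTo

variable {α β : Type*}

theorem restrictTo_of_mem (f : α → α) {A : Set α} {i : α} (hi : i ∈ A) : restrictTo f A i = f i :=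
  if_pos hi

theorem restrictTo_of_notMem (f : α → α) {A : Set α} {i : α} (hi : i ∉ A) : restrictTo f A i = i :=
  if_neg hi

theorem restrictTo_involutive {f : α → α} (hf : Involutive f) {A : Set α}
    (hA : ∀ i ∈ A, f i ∈ A) : Involutive (restrictTo f A) := fun i => by
  by_cases hi : i ∈ A
  · rw [restrictTo_of_mem f hi, restrictTo_of_mem f (hA i hi), hf i]
  · rw [restrictTo_of_notMem f hi, restrictTo_of_notMem f hi]

theorem semiconj_restrictTo_image {e : α → β} (he : Injective e) {f : α → α} {g : β → β}
    (h : Semiconj e f g) (A : Set α) : Semiconj e (restrictTo f A) (restrictTo g (e '' A)) :=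
  fun i => by
    by_cases hi : i ∈ A
    · rw [restrictTo_of_mem f hi, restrictTo_of_mem g (Set.mem_image_of_mem e hi), h.eq]
    · rw [restrictTo_of_notMem f hi, restrictTo_of_notMem g (mt he.mem_set_image.1 hi)]

end RestrictTo

section InsertBefore

variable {α : Type*} [DecidableEq α]

/-- The self-map `f` with an extra point `none` inserted on its arrows into `a`, so that `none` is
followed by `a`. For a rotation this inserts a marked point on the circle; for an involution fixing
`a` it adds the chord `{none, a}`. -/
def insertBefore (f : α → α) (a : α) : Option α → Option α :=
  swap none (some a) ∘ Option.map f

theorem insertBefore_none (f : α → α) (a : α) : insertBefore f a none = some a :=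
  swap_apply_left _ _

theorem insertBefore_some_of_eq {f : α → α} {a i : α} (h : f i = a) :
    insertBefore f a (some i) = none := by
  simp [insertBefore, h]

theorem insertBefore_some_of_ne {f : α → α} {a i : α} (h : f i ≠ a) :
    insertBefore f a (some i) = some (f i) :=
  swap_apply_of_ne_of_ne (Option.some_ne_none _) (Option.some_injective _ |>.ne h)

theorem insertBefore_involutive {f : α → α} (hf : Involutive f) {a : α} (ha : f a = a) :
    Involutive (insertBefore f a) := by
  rintro (_ | i)
  · rw [insertBefore_none, insertBefore_some_of_eq ha]
  · by_cases hi : f i = a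
    · rw [insertBefore_some_of_eq hi, insertBefore_none, ← ha, ← hi, hf i]
    · have hfi : f (f i) ≠ a := fun h => hi (by rw [← hf (f i), h, ha])
      rw [insertBefore_some_of_ne hi, insertBefore_some_of_ne hfi, hf i]

variable {r : α → α} {S : Option α → Option α}

theorem cycles_insertBefore_comp_of_some (hr : Injective r) (hS : Injective S) {p q : α}
    (hpq : S (some p) = some q) :
    cycles (insertBefore r p ∘ S) = cycles (insertBefore r (r q) ∘ S) := by
  have hP : (Option.map r ∘ S) (some p) = some (r q) := by simp [hpq]
  have h := cycles_swap_comp_apply (a := none) ((Option.map_injective hr).comp hS)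
    (Option.some_ne_none p) (hP ▸ Option.some_ne_none _)
  rw [hP] at h
  exact h.symm

theorem cycles_insertBefore_comp_of_none (hr : Injective r) (hS : Injective S)
    (h : S none = none) (a b : α) :
    cycles (insertBefore r a ∘ S) = cycles (insertBefore r b ∘ S) :=
  cycles_swap_comp_of_fixed (f := Option.map r ∘ S) ((Option.map_injective hr).comp hS)
    (by simp [h]) (Option.some_ne_none a) (Option.some_ne_none b)

end InsertBefore

section FourTerm

variable {α M : Type*} [DecidableEq α] [AddCommGroup M] {r : α → α} {T : Option α → Option α}
  {p q : α} {A : Set (Option α)}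

theorem cycles_restrictTo_four_term (hr : Injective r) (hT : Involutive T)
    (hpq : T (some p) = some q) (hA : ∀ i ∈ A, T i ∈ A) (w : ℕ → M) :
    w (cycles (insertBefore r p ∘ restrictTo T A)) -
      w (cycles (insertBefore r (r p) ∘ restrictTo T A)) +
      w (cycles (insertBefore r q ∘ restrictTo T A)) -
      w (cycles (insertBefore r (r q) ∘ restrictTo T A)) = 0 := by
  have hqp : T (some q) = some p := by rw [← hpq, hT]
  have slide {a b : α} (hab : restrictTo T A (some a) = some b) :=
    cycles_insertBefore_comp_of_some hr (restrictTo_involutive hT hA).injective hab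
  by_cases hp : some p ∈ A
  · have hq : some q ∈ A := hpq ▸ hA _ hp
    rw [slide ((restrictTo_of_mem T hp).trans hpq), slide ((restrictTo_of_mem T hq).trans hqp)]
    abel
  · have hq : some q ∉ A := fun hq => hp (hqp ▸ hA _ hq)
    rw [slide (restrictTo_of_notMem T hp), slide (restrictTo_of_notMem T hq)]
    abel

theorem cycles_restrictTo_compl_four_term (hr : Injective r) (hT : Involutive T)
    (hpq : T (some p) = some q) (hA : ∀ i ∈ A, T i ∈ A) (w : ℕ → ℕ → M) :
    let F a := w (cycles (insertBefore r a ∘ restrictTo T A))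
      (cycles (insertBefore r a ∘ restrictTo T Aᶜ))
    F p - F (r p) + F q - F (r q) = 0 := by
  intro F
  have hAc : ∀ i ∈ Aᶜ, T i ∈ Aᶜ := fun i hi h => hi (hT i ▸ hA _ h)
  have const {B : Set (Option α)} (hB : ∀ i ∈ B, T i ∈ B) (h : none ∉ B) (a : α) :=
    cycles_insertBefore_comp_of_none hr (restrictTo_involutive hT hB).injective
      (restrictTo_of_notMem T h) a p
  by_cases h : none ∈ A
  · simp only [F, const hAc (Set.notMem_compl_iff.2 h)]
    exact cycles_restrictTo_four_term hr hT hpq hA fun k => w k _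
  · simp only [F, const hA h]
    exact cycles_restrictTo_four_term hr hT hpq hAc (w _)

end FourTerm

section PdSum

variable {α β M : Type*} [Fintype α] [DecidableEq α] [Fintype β] [DecidableEq β]

/-- The weighted count of the partial duals of the chord diagram with rotation `R` and involution
`T`, in which the set of chords with endpoint set `A` has weight `w (c(R ∘ T_A)) (c(R ∘ T_{Aᶜ}))`.
The partial-dual genus polynomial is the case where `w` is a power of the variable, see
`pdPoly_eq_pdSum`. -/
noncomputable def pdSum [AddCommMonoid M] (w : ℕ → ℕ → M) (R T : α → α) : M :=
  ∑ A : Finset α with ∀ i ∈ A, T i ∈ A,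
    w (cycles (R ∘ restrictTo T (A : Set α))) (cycles (R ∘ restrictTo T (A : Set α)ᶜ))

theorem pdPoly_eq_pdSum (n : ℕ) [NeZero n] (σ : ZMod (2 * n) → ZMod (2 * n)) :
    pdPoly n σ = pdSum (fun k l => (X : ℤ[X]) ^ ((n + 2 - k - l) / 2)) (rot n) σ :=
  dif_neg (NeZero.ne n)

theorem pdSum_eq_of_semiconj [AddCommMonoid M] (w : ℕ → ℕ → M) (e : α ≃ β) {R T : α → α}
    {R' T' : β → β} (hR : Semiconj e R R') (hT : Semiconj e T T') :
    pdSum w R T = pdSum w R' T' := by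
  have hcycles (A : Set α) :
      cycles (R ∘ restrictTo T A) = cycles (R' ∘ restrictTo T' (e '' A)) :=
    cycles_eq_of_semiconj e (hR.comp_right (semiconj_restrictTo_image e.injective hT A))
  refine Finset.sum_equiv e.finsetCongr (fun A => ?_) fun A _ => ?_
  · rw [Finset.mem_filter_univ, Finset.mem_filter_univ, ← e.forall_congr_right]
    simp [← hT.eq]
  · rw [hcycles, hcycles, Set.image_compl_eq e.bijective, e.finsetCongr_apply, Finset.coe_map,
      coe_toEmbedding]

theorem pdSum_four_term [AddCommGroup M] (w : ℕ → ℕ → M) {r : α → α} (hr : Injective r)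
    {T : Option α → Option α} (hT : Involutive T) {p q : α} (hpq : T (some p) = some q) :
    pdSum w (insertBefore r p) T - pdSum w (insertBefore r (r p)) T +
      pdSum w (insertBefore r q) T - pdSum w (insertBefore r (r q)) T = 0 := by
  simp only [pdSum, ← Finset.sum_sub_distrib, ← Finset.sum_add_distrib]
  refine Finset.sum_eq_zero fun A hA => ?_
  exact cycles_restrictTo_compl_four_term hr hT hpq (Finset.mem_filter.1 hA).2 w

end PdSum

section Insertion

variable {m N : ℕ} {φ : ZMod m → ZMod N} {x : ZMod N} {a : ZMod m}

theorem IsInsertion.apply_add_one_of_eq (h : IsInsertion φ x) {j : ZMod m} (hx : x = φ j + 1) :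
    φ (j + 1) = x + 1 := by
  rw [h.2, if_pos hx.symm, hx]
  ring

theorem IsInsertion.surjective_elim' [NeZero N] (h : IsInsertion φ x) (ha : φ a = x + 1) :
    Surjective (Option.elim' x φ) := by
  have add_one_mem : ∀ y ∈ Set.range (Option.elim' x φ), y + 1 ∈ Set.range (Option.elim' x φ) := by
    rintro _ ⟨_ | j, rfl⟩
    · exact ⟨some a, ha⟩
    · by_cases hj : φ j + 1 = x
      · exact ⟨none, hj.symm⟩
      · exact ⟨some (j + 1), (h.2 j).trans (if_neg hj)⟩
  have add_natCast_mem (k : ℕ) : x + k ∈ Set.range (Option.elim' x φ) := by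
    induction k with
    | zero => exact ⟨none, by simp⟩
    | succ k ih => simpa [add_assoc] using add_one_mem _ ih
  intro y
  simpa using add_natCast_mem (y - x).val

theorem IsInsertion.bijective_elim' [NeZero m] (hN : N = m + 1) (h : IsInsertion φ x)
    (ha : φ a = x + 1) : Bijective (Option.elim' x φ) := by
  have : NeZero N := ⟨by omega⟩
  refine (Fintype.bijective_iff_surjective_and_card _).2 ⟨h.surjective_elim' ha, ?_⟩
  rw [Fintype.card_option, ZMod.card, ZMod.card, hN]

theorem IsInsertion.semiconj_elim' (h : IsInsertion φ x) (hinj : Injective (Option.elim' x φ))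
    (ha : φ a = x + 1) :
    Semiconj (Option.elim' x φ) (insertBefore (· + 1) a) (· + 1) := by
  rintro (_ | j)
  · rw [insertBefore_none]
    exact ha
  have hφ := h.2 j
  by_cases hx : φ j + 1 = x
  · have hφa : φ (j + 1) = φ a := by
      rw [hφ, if_pos hx, ha, ← hx]
      ring
    have hja : some (j + 1) = some a := hinj hφa
    rw [insertBefore_some_of_eq (f := (· + 1)) (Option.some_injective _ hja)]
    exact hx.symm
  · rw [if_neg hx] at hφ
    have hja : j + 1 ≠ a := by
      rintro rfl
      have hjx : some j = none := hinj (add_right_cancel (hφ.symm.trans ha))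
      exact Option.some_ne_none j hjx
    rw [insertBefore_some_of_ne (f := (· + 1)) hja]
    exact hφ

end Insertion

section InsertedDiagram

variable {n : ℕ} {τ : ZMod (2 * n - 1) → ZMod (2 * n - 1)} {u a : ZMod (2 * n - 1)}
  {φ : ZMod (2 * n - 1) → ZMod (2 * n)} {x : ZMod (2 * n)} {D : ZMod (2 * n) → ZMod (2 * n)}

theorem IsInsertedDiagram.semiconj_elim' (h : IsInsertedDiagram n τ u φ x D)
    (hτ : Injective τ) (hu : τ u = u) :
    Semiconj (Option.elim' x φ) (insertBefore τ u) D := by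
  obtain ⟨-, hD, hDu, hDx⟩ := h
  rintro (_ | j)
  · rw [insertBefore_none]
    exact hDx.symm
  by_cases hj : j = u
  · rw [hj, insertBefore_some_of_eq hu]
    exact hDu.symm
  · rw [insertBefore_some_of_ne fun h => hj (hτ (h.trans hu.symm))]
    exact (hD j hj).symm

theorem IsInsertedDiagram.pdSum_eq [NeZero n] [NeZero (2 * n - 1)] {M : Type*} [AddCommMonoid M]
    (w : ℕ → ℕ → M) (h : IsInsertedDiagram n τ u φ x D) (hτ : Injective τ) (hu : τ u = u)
    (ha : φ a = x + 1) :
    pdSum w (rot n) D = pdSum w (insertBefore (· + 1) a) (insertBefore τ u) := by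
  have hbij := h.1.bijective_elim' (by have := NeZero.pos n; omega) ha
  exact (pdSum_eq_of_semiconj w (.ofBijective _ hbij) (h.1.semiconj_elim' hbij.injective ha)
    (h.semiconj_elim' hτ hu)).symm

end InsertedDiagram

theorem pdPoly_four_term_relation_general {M : Type*} [AddCommGroup M] (w : ℕ → ℕ → M)
    {n : ℕ} [NeZero n] {τ : ZMod (2 * n - 1) → ZMod (2 * n - 1)} {p q u : ZMod (2 * n - 1)}
    (hτ : Involutive τ) (hpq : τ p = q) (hu : τ u = u) (hpu : p ≠ u)
    {φ₁ φ₂ φ₃ φ₄ : ZMod (2 * n - 1) → ZMod (2 * n)} {x₁ x₂ x₃ x₄ : ZMod (2 * n)}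
    {D₁ D₂ D₃ D₄ : ZMod (2 * n) → ZMod (2 * n)}
    (h₁ : IsInsertedDiagram n τ u φ₁ x₁ D₁) (hx₁ : x₁ + 1 = φ₁ p)
    (h₂ : IsInsertedDiagram n τ u φ₂ x₂ D₂) (hx₂ : x₂ = φ₂ p + 1)
    (h₃ : IsInsertedDiagram n τ u φ₃ x₃ D₃) (hx₃ : x₃ + 1 = φ₃ q)
    (h₄ : IsInsertedDiagram n τ u φ₄ x₄ D₄) (hx₄ : x₄ = φ₄ q + 1) :
    pdSum w (rot n) D₁ - pdSum w (rot n) D₂ + pdSum w (rot n) D₃ - pdSum w (rot n) D₄ = 0 := by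
  have : NeZero (2 * n - 1) := ⟨by have := NeZero.pos n; omega⟩
  have hqu : τ p ≠ u := fun h => hpu (hτ.injective (h.trans hu.symm))
  have hT : insertBefore τ u (some p) = some q := by rw [insertBefore_some_of_ne hqu, hpq]
  rw [h₁.pdSum_eq w hτ.injective hu hx₁.symm,
    h₂.pdSum_eq w hτ.injective hu (h₂.1.apply_add_one_of_eq hx₂),
    h₃.pdSum_eq w hτ.injective hu hx₃.symm,
    h₄.pdSum_eq w hτ.injective hu (h₄.1.apply_add_one_of_eq hx₄)]
  exact pdSum_four_term w (add_left_injective 1) (insertBefore_involutive hτ hu) hT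

/-- The partial-dual genus polynomial satisfies the four-term relation:
`∂Γ_{D₁} - ∂Γ_{D₂} + ∂Γ_{D₃} - ∂Γ_{D₄} = 0` for the four chord diagrams obtained
from a common configuration by inserting `x` immediately before `p`, after `p`,
before `q`, and after `q`. In other words, it is a weight system. -/
theorem pdPoly_four_term_relation (n : ℕ) (hn : 2 ≤ n)
    (τ : ZMod (2 * n - 1) → ZMod (2 * n - 1)) (p q u : ZMod (2 * n - 1))
    (hτ : IsConfig n τ p q u)
    (φ₁ φ₂ φ₃ φ₄ : ZMod (2 * n - 1) → ZMod (2 * n))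
    (x₁ x₂ x₃ x₄ : ZMod (2 * n))
    (D₁ D₂ D₃ D₄ : ZMod (2 * n) → ZMod (2 * n))
    (h₁ : IsInsertedDiagram n τ u φ₁ x₁ D₁) (hx₁ : x₁ + 1 = φ₁ p)
    (h₂ : IsInsertedDiagram n τ u φ₂ x₂ D₂) (hx₂ : x₂ = φ₂ p + 1)
    (h₃ : IsInsertedDiagram n τ u φ₃ x₃ D₃) (hx₃ : x₃ + 1 = φ₃ q)
    (h₄ : IsInsertedDiagram n τ u φ₄ x₄ D₄) (hx₄ : x₄ = φ₄ q + 1) :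
    pdPoly n D₁ - pdPoly n D₂ + pdPoly n D₃ - pdPoly n D₄ = 0 := by
  obtain ⟨hinv, hp, hpq, hu, -⟩ := hτ
  have : NeZero n := ⟨by omega⟩
  have hpu : p ≠ u := fun h => hpq (by rw [← hp, h, hu])
  simp only [pdPoly_eq_pdSum]
  exact pdPoly_four_term_relation_general _ hinv hp hu hpu h₁ hx₁ h₂ hx₂ h₃ hx₃ h₄ hx₄
end

section
/- For every chord diagram σ of order n and every set A of its chords, c(r ∘ σ_A) + c(r ∘ σ_{A^c}) ≡ n (mod 2). In particular n + 2 − c(r ∘ σ_A) − c(r ∘ σ_{A^c}) is even, so the genus g_A(σ) of the partial dual of σ relative to A is an integer. -/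
/-!
The sign of a permutation `f` of `N` points is `(-1) ^ (c(f) + N)`. The permutation `σ` factors as
`σ_A * σ_{Aᶜ}`, so `sign (r * σ_A) * sign (r * σ_{Aᶜ}) = (sign r) ^ 2 * sign σ = sign σ`; comparing
exponents gives `c(r ∘ σ_A) + c(r ∘ σ_{Aᶜ}) ≡ c(σ) + N`. A chord diagram of order `n` has `N = 2n`
and `c(σ) = n`.
-/

section

open Equiv Equiv.Perm

variable {α : Type*}

theorem quot_mk_eq_iff_sameCycle (f : Perm α) {x y : α} :
    Quot.mk (fun i j => f i = j) x = Quot.mk (fun i j => f i = j) y ↔ f.SameCycle x y := by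
  have sameCycle_of_apply_eq (x y : α) (hxy : f x = y) : f.SameCycle x y := ⟨1, hxy⟩
  constructor
  · exact fun h => Quotient.exact (congrArg (Quot.lift (Quotient.mk (SameCycle.setoid f))
      fun x y hxy => Quotient.sound (sameCycle_of_apply_eq x y hxy)) h)
  · have mk_apply (z : α) :
        Quot.mk (fun i j => f i = j) (f z) = Quot.mk (fun i j => f i = j) z :=
      (Quot.sound (r := fun i j => f i = j) rfl).symm
    rintro ⟨k, rfl⟩
    induction k with
    | zero => rfl
    | succ k ih => rw [add_comm, zpow_one_add, mul_apply, mk_apply, ih]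
    | pred k ih => rw [ih, ← mk_apply ((f ^ (-(k : ℤ) - 1)) x), ← mul_apply, ← zpow_one_add,
        add_sub_cancel]

section CycleCount

variable [Fintype α] [DecidableEq α] (f : Perm α)

/-- The cycle of `f` through a point. A point moved by `f` is sent to its cycle factor; a fixed
point, whose trivial cycle is not among the cycle factors of `f`, is sent to itself. -/
def cycleThrough (x : α) : f.cycleFactorsFinset ⊕ Function.fixedPoints f :=
  if hx : f x = x then .inr ⟨x, hx⟩
  else .inl ⟨f.cycleOf x, cycleOf_mem_cycleFactorsFinset_iff.2 (mem_support.2 hx)⟩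

theorem cycleThrough_eq_iff_sameCycle {x y : α} :
    cycleThrough f x = cycleThrough f y ↔ f.SameCycle x y := by
  by_cases hx : f x = x <;> by_cases hy : f y = y
  · simpa [cycleThrough, hx, hy, Subtype.ext_iff] using
      (⟨fun h => h.sameCycle f, fun h => h.eq_of_left hx⟩ : x = y ↔ f.SameCycle x y)
  · simpa [cycleThrough, hx, hy] using fun h : f.SameCycle x y => hy (h.apply_eq_self_iff.1 hx)
  · simpa [cycleThrough, hx, hy] using fun h : f.SameCycle x y => hx (h.apply_eq_self_iff.2 hy)
  · simpa [cycleThrough, hx, hy] using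
      (sameCycle_iff_cycleOf_eq_of_mem_support (mem_support.2 hx) (mem_support.2 hy)).symm

theorem cycleThrough_surjective : Function.Surjective (cycleThrough f) := by
  rintro (⟨c, hc⟩ | ⟨x, hx : f x = x⟩)
  · obtain ⟨x, hxc⟩ := (mem_cycleFactorsFinset_iff.1 hc).1.nonempty_support
    have hx : f x ≠ x := mem_support.1 (mem_cycleFactorsFinset_support_le hc hxc)
    exact ⟨x, by simp [cycleThrough, hx, cycle_is_cycleOf hxc hc]⟩
  · exact ⟨x, by simp [cycleThrough, hx]⟩

theorem cycles_eq_card_cycleFactorsFinset_add_card_fixedPoints :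
    cycles f = f.cycleFactorsFinset.card + Fintype.card (Function.fixedPoints f) := by
  have cycleThrough_eq_of_apply_eq (x y : α) (hxy : f x = y) :
      cycleThrough f x = cycleThrough f y :=
    (cycleThrough_eq_iff_sameCycle f).2 ((quot_mk_eq_iff_sameCycle f).1 (Quot.sound hxy))
  have bijective_lift : Function.Bijective (Quot.lift _ cycleThrough_eq_of_apply_eq) := by
    refine ⟨?_, (Quot.surjective_lift _).2 (cycleThrough_surjective f)⟩
    rintro ⟨x⟩ ⟨y⟩ hxy
    exact (quot_mk_eq_iff_sameCycle f).2 ((cycleThrough_eq_iff_sameCycle f).1 hxy)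
  rw [cycles, Nat.card_eq_of_bijective _ bijective_lift, Nat.card_eq_fintype_card,
    Fintype.card_sum, Fintype.card_coe]

theorem cycles_eq_card_parts_partition : cycles f = f.partition.parts.card := by
  rw [cycles_eq_card_cycleFactorsFinset_add_card_fixedPoints, card_fixedPoints, sum_cycleType,
    parts_partition, cycleType_def, Multiset.card_add, Multiset.card_map, Multiset.card_replicate,
    Finset.card_val]

theorem sign_eq_neg_one_pow_cycles_add_card :
    sign f = (-1) ^ (cycles f + Fintype.card α) := by
  have card_support_le : f.support.card ≤ Fintype.card α := f.support.card_le_univ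
  rw [sign_of_cycleType, sum_cycleType, cycles_eq_card_parts_partition, parts_partition,
    Multiset.card_add, Multiset.card_replicate]
  exact neg_one_pow_congr (by grind)

end CycleCount

theorem cycles_mul_prime_of_pow_eq_one_of_apply_ne [Fintype α] {f : Perm α} {p : ℕ} [Fact p.Prime]
    (hf : f ^ p = 1) (hfix : ∀ x, f x ≠ x) : cycles f * p = Fintype.card α := by
  classical
  have support_eq : f.support = Finset.univ := by
    ext x
    simp [hfix x]
  have parts_eq : f.partition.parts = Multiset.replicate f.partition.parts.card p := by
    rw [parts_partition, support_eq, Finset.card_univ, Nat.sub_self, Multiset.replicate_zero,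
      add_zero]
    exact cycleType_of_pow_prime_eq_one hf
  calc
    cycles f * p = (Multiset.replicate f.partition.parts.card p).sum := by
      rw [cycles_eq_card_parts_partition, Multiset.sum_replicate, smul_eq_mul]
    _ = f.partition.parts.sum := congrArg Multiset.sum parts_eq.symm
    _ = Fintype.card α := f.partition.parts_sum

/-- The permutation `σ_A` agreeing with `σ` on the invariant set `A` and fixing every other
point: `restrictTo σ A` as a permutation. -/
noncomputable def restrictPerm (σ : Perm α) {A : Set α} (hA : ∀ x, σ x ∈ A ↔ x ∈ A) : Perm α :=
  open Classical in ofSubtype (σ.subtypePerm hA)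

theorem coe_restrictPerm (σ : Perm α) {A : Set α} (hA : ∀ x, σ x ∈ A ↔ x ∈ A) :
    ⇑(restrictPerm σ hA) = restrictTo σ A := by
  ext x
  by_cases hx : x ∈ A
  · simp [restrictPerm, restrictTo, hx, ofSubtype_apply_of_mem]
  · simp [restrictPerm, restrictTo, hx, ofSubtype_apply_of_not_mem]

theorem restrictPerm_mul_restrictPerm_compl (σ : Perm α) {A : Set α}
    (hA : ∀ x, σ x ∈ A ↔ x ∈ A) :
    restrictPerm σ hA * restrictPerm σ (A := Aᶜ) (fun x => not_congr (hA x)) = σ := by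
  ext x
  rw [mul_apply, coe_restrictPerm, coe_restrictPerm]
  by_cases hx : x ∈ A <;> simp [restrictTo, hx, hA]

theorem sign_mul_restrictPerm_mul_sign_mul_restrictPerm_compl [Fintype α] [DecidableEq α]
    (ρ σ : Perm α) {A : Set α} (hA : ∀ x, σ x ∈ A ↔ x ∈ A) :
    sign (ρ * restrictPerm σ hA) *
      sign (ρ * restrictPerm σ (A := Aᶜ) (fun x => not_congr (hA x))) = sign σ := by
  rw [map_mul, map_mul, mul_mul_mul_comm, Int.units_mul_self, one_mul, ← map_mul,
    restrictPerm_mul_restrictPerm_compl]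

theorem units_neg_one_pow_eq_pow_iff_modEq {m n : ℕ} :
    (-1 : ℤˣ) ^ m = (-1) ^ n ↔ m ≡ n [MOD 2] := by
  have orderOf_eq : orderOf (-1 : ℤˣ) = 2 := orderOf_eq_prime (by decide) (by decide)
  rw [pow_eq_pow_iff_modEq, orderOf_eq]

theorem partial_dual_cycles_parity_general [Fintype α] (ρ σ : Perm α) {A : Set α}
    (hA : ∀ i ∈ A, σ i ∈ A) :
    cycles (ρ ∘ restrictTo σ A) + cycles (ρ ∘ restrictTo σ Aᶜ) ≡
      cycles σ + Fintype.card α [MOD 2] := by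
  classical
  have mem_iff (x : α) : σ x ∈ A ↔ x ∈ A :=
    ⟨fun hx => by simpa using perm_symm_mapsTo_of_mapsTo σ hA hx, hA x⟩
  have modEq_exponents :
      cycles (ρ ∘ restrictTo σ A) + Fintype.card α +
        (cycles (ρ ∘ restrictTo σ Aᶜ) + Fintype.card α) ≡ cycles σ + Fintype.card α [MOD 2] := by
    simpa only [sign_eq_neg_one_pow_cycles_add_card, ← pow_add,
      units_neg_one_pow_eq_pow_iff_modEq, coe_mul, coe_restrictPerm] using
      sign_mul_restrictPerm_mul_sign_mul_restrictPerm_compl ρ σ mem_iff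
  grind [Nat.ModEq]

end

/-- For every chord diagram `σ` of order `n` and every set `A` of its chords,
`c(r ∘ σ_A) + c(r ∘ σ_{Aᶜ}) ≡ n (mod 2)`; in particular the genus `g_A(σ)` of the
partial dual of `σ` relative to `A` is an integer. -/
theorem partial_dual_cycles_parity (n : ℕ) (hn : 0 < n)
    (σ : ZMod (2 * n) → ZMod (2 * n))
    (hinv : Function.Involutive σ) (hfpf : ∀ i, σ i ≠ i)
    (A : Set (ZMod (2 * n))) (hA : ∀ i ∈ A, σ i ∈ A) :
    cycles (rot n ∘ restrictTo σ A) + cycles (rot n ∘ restrictTo σ Aᶜ) ≡ n [MOD 2] := by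
  have : NeZero (2 * n) := ⟨by lia⟩
  have sq_eq_one : hinv.toPerm ^ 2 = 1 := by ext; simp [sq, hinv _]
  have hcycles := cycles_mul_prime_of_pow_eq_one_of_apply_ne sq_eq_one hfpf
  have hparity := partial_dual_cycles_parity_general (Equiv.addRight 1) hinv.toPerm hA
  rw [Function.Involutive.coe_toPerm, ZMod.card] at hcycles hparity
  exact hparity.trans (by grind [Nat.ModEq])
end

section
/- For every chord diagram σ of order n and every set A of its chords, c(r ∘ σ_A) + c(r ∘ σ_{A^c}) ≤ n + 2. Equivalently, the genus g_A(σ) of the partial dual of σ relative to A is nonnegative. -/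
/-!
A permutation `p` of a finite set acts on the functions on that set, and its invariants form a space
of dimension `c(p)`. If `f` and `g` are endomorphisms of a vector space, then `g - 1` maps the
vectors fixed by `f * g` into `range (f - 1) ⊓ range (g - 1)`, because `g v - v = -(f - 1) (g v)`
for such `v`, and it kills only the common fixed vectors. If `f` and `g` come from permutations that
generate a group with `k` orbits, then the common fixed vectors form a space of dimension `k` and
`range (f - 1) ⊔ range (g - 1)` has codimension at most `k`. Counting dimensions gives
`c(p) + c(σ) + c(p ∘ σ) ≤ N + 2k` for permutations `p`, `σ` of `N` points. Taking `p = r ∘ σ_A`, one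
has `p ∘ σ = r ∘ σ_{Aᶜ}`, while `c(σ) ≥ N / 2` because `σ` is an involution and `k = 1` because the
rotation is transitive.
-/

open Module LinearMap

/-- The number of connected components of the union of the functional graphs of `f` and `g`. For
permutations of a finite set this is the number of orbits of the group they generate. -/
noncomputable def jointCycles {α : Type*} (f g : α → α) : ℕ :=
  Nat.card (Quot fun i j => f i = j ∨ g i = j)

section LinearAlgebra

variable {K V : Type*} [DivisionRing K] [AddCommGroup V] [Module K V] [FiniteDimensional K V]

theorem finrank_ker_mul_sub_one_le (f g : End K V) :
    finrank K (ker (f * g - 1)) ≤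
      finrank K ↥(range (f - 1) ⊓ range (g - 1)) + finrank K ↥(ker (f - 1) ⊓ ker (g - 1)) := by
  set W := ker (f * g - 1)
  have fixed {v : V} (hv : v ∈ W) : f (g v) = v := by simpa [W, sub_eq_zero] using hv
  have map_le : W.map (g - 1) ≤ range (f - 1) ⊓ range (g - 1) := by
    rintro _ ⟨v, hv, rfl⟩
    exact ⟨⟨-g v, by simp [fixed hv, ← sub_eq_neg_add]⟩, mem_range_self _ v⟩
  have inf_le : W ⊓ ker (g - 1) ≤ ker (f - 1) ⊓ ker (g - 1) := by
    rintro v ⟨hv, hgv⟩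
    have hg : g v = v := by simpa [sub_eq_zero] using hgv
    have hf : f v = v := by simpa [hg] using fixed hv
    exact ⟨by simp [hf], hgv⟩
  have rank_nullity : finrank K (W.map (g - 1)) + finrank K ↥(W ⊓ ker (g - 1)) = finrank K W := by
    rw [← finrank_range_add_finrank_ker ((g - 1).domRestrict W), range_domRestrict,
      ker_domRestrict, ← Submodule.finrank_map_subtype_eq W, Submodule.map_comap_subtype]
  rw [← rank_nullity]
  exact add_le_add (Submodule.finrank_mono map_le) (Submodule.finrank_mono inf_le)

end LinearAlgebra

section Invariants

variable (K : Type*) {α : Type*}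

section Ring

variable [Ring K]

theorem mem_range_funLeft_quotMk {s : α → α → Prop} {f : α → K} :
    f ∈ range (funLeft K K (Quot.mk s)) ↔ ∀ i j, s i j → f i = f j := by
  constructor
  · rintro ⟨f, rfl⟩ i j hij
    exact congrArg f (Quot.sound hij)
  · exact fun hf => ⟨Quot.lift f hf, rfl⟩

theorem mem_ker_funLeft_sub_one {p : α → α} {f : α → K} :
    f ∈ ker (funLeft K K p - 1) ↔ ∀ i, f (p i) = f i := by
  simp [funext_iff, sub_eq_zero, funLeft_apply]

theorem ker_funLeft_sub_one (p : α → α) :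
    ker (funLeft K K p - 1) = range (funLeft K K (Quot.mk fun i j => p i = j)) := by
  ext f
  rw [mem_ker_funLeft_sub_one, mem_range_funLeft_quotMk]
  simp [eq_comm]

theorem ker_inf_ker_funLeft_sub_one (p q : α → α) :
    ker (funLeft K K p - 1) ⊓ ker (funLeft K K q - 1) =
      range (funLeft K K (Quot.mk fun i j => p i = j ∨ q i = j)) := by
  ext f
  rw [Submodule.mem_inf, mem_ker_funLeft_sub_one, mem_ker_funLeft_sub_one,
    mem_range_funLeft_quotMk]
  simp [or_imp, forall_and, eq_comm]

theorem single_sub_single_mem_range_funLeft_sub_one [DecidableEq α] {p : α → α}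
    (hp : Function.Injective p) (i : α) :
    (Pi.single i 1 - Pi.single (p i) 1 : α → K) ∈ range (funLeft K K p - 1) :=
  ⟨Pi.single (p i) 1, by
    ext j
    simp [funLeft_apply, Pi.single_apply, hp.eq_iff]⟩

end Ring

variable [DivisionRing K]

theorem finrank_range_funLeft_quotMk (s : α → α → Prop) [Finite (Quot s)] :
    finrank K (range (funLeft K K (Quot.mk s))) = Nat.card (Quot s) := by
  have := Fintype.ofFinite (Quot s)
  rw [finrank_range_of_inj (funLeft_injective_of_surjective K K _ Quot.mk_surjective),
    finrank_fintype_fun_eq_card, Nat.card_eq_fintype_card]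

variable {K} in
theorem finrank_le_card_quot {M : Type*} [AddCommGroup M] [Module K M] {s : α → α → Prop}
    [Finite (Quot s)] {v : α → M} (hs : ∀ i j, s i j → v i = v j)
    (hv : Submodule.span K (Set.range v) = ⊤) :
    finrank K M ≤ Nat.card (Quot s) := by
  have := Fintype.ofFinite (Quot s)
  have range_lift : Set.range (Quot.lift v hs) = Set.range v := Set.range_quot_lift hs
  rw [← finrank_top, ← hv, ← range_lift, Nat.card_eq_fintype_card]
  exact finrank_range_le_card _

variable [Finite α]

theorem finrank_ker_funLeft_sub_one (p : α → α) :
    finrank K (ker (funLeft K K p - 1)) = cycles p := by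
  rw [cycles, ← finrank_range_funLeft_quotMk K, ker_funLeft_sub_one]

theorem finrank_ker_inf_ker_funLeft_sub_one (p q : α → α) :
    finrank K ↥(ker (funLeft K K p - 1) ⊓ ker (funLeft K K q - 1)) = jointCycles p q := by
  rw [jointCycles, ← finrank_range_funLeft_quotMk K, ker_inf_ker_funLeft_sub_one]

theorem finrank_range_funLeft_sub_one_add_cycles (p : α → α) :
    finrank K (range (funLeft K K p - 1)) + cycles p = Nat.card α := by
  have := Fintype.ofFinite α
  rw [← finrank_ker_funLeft_sub_one K, finrank_range_add_finrank_ker,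
    finrank_fintype_fun_eq_card, Nat.card_eq_fintype_card]

theorem card_le_finrank_range_sup_range_add_jointCycles {p q : α → α}
    (hp : Function.Injective p) (hq : Function.Injective q) :
    Nat.card α ≤
      finrank K ↥(range (funLeft K K p - 1) ⊔ range (funLeft K K q - 1)) + jointCycles p q := by
  classical
  have := Fintype.ofFinite α
  set U := range (funLeft K K p - 1) ⊔ range (funLeft K K q - 1)
  let v (i : α) : (α → K) ⧸ U := U.mkQ (Pi.single i 1)
  have invariant (i j : α) (hij : p i = j ∨ q i = j) : v i = v j := by
    refine (Submodule.Quotient.eq U).2 ?_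
    obtain rfl | rfl := hij
    · exact Submodule.mem_sup_left (single_sub_single_mem_range_funLeft_sub_one K hp i)
    · exact Submodule.mem_sup_right (single_sub_single_mem_range_funLeft_sub_one K hq i)
  have spanning : Submodule.span K (Set.range v) = ⊤ := by
    have range_v : Set.range v = U.mkQ '' Set.range (Pi.basisFun K α) := by
      simp [v, ← Set.range_comp, Function.comp_def]
    rw [range_v, Submodule.span_image, (Pi.basisFun K α).span_eq, Submodule.map_top,
      Submodule.range_mkQ]
  have coinvariants : finrank K ((α → K) ⧸ U) ≤ jointCycles p q :=
    finrank_le_card_quot invariant spanning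
  have quotient := U.finrank_quotient_add_finrank
  rw [finrank_fintype_fun_eq_card, ← Nat.card_eq_fintype_card] at quotient
  omega

end Invariants

section Cycles

variable {α : Type*} [Finite α]

theorem cycles_add_cycles_add_cycles_comp_le {p q : α → α}
    (hp : Function.Injective p) (hq : Function.Injective q) :
    cycles p + cycles q + cycles (p ∘ q) ≤ Nat.card α + 2 * jointCycles p q := by
  let P : End ℚ (α → ℚ) := funLeft ℚ ℚ p
  let Q : End ℚ (α → ℚ) := funLeft ℚ ℚ q
  have fixed : cycles (p ∘ q) ≤ finrank ℚ ↥(range (P - 1) ⊓ range (Q - 1)) + jointCycles p q := by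
    rw [← finrank_ker_funLeft_sub_one ℚ, ← finrank_ker_inf_ker_funLeft_sub_one ℚ, funLeft_comp,
      inf_comm, inf_comm (ker _)]
    exact finrank_ker_mul_sub_one_le Q P
  have sup_add_inf := Submodule.finrank_sup_add_finrank_inf_eq (range (P - 1)) (range (Q - 1))
  have sup_bound : Nat.card α ≤ finrank ℚ ↥(range (P - 1) ⊔ range (Q - 1)) + jointCycles p q :=
    card_le_finrank_range_sup_range_add_jointCycles ℚ hp hq
  have rank_p : finrank ℚ (range (P - 1)) + cycles p = Nat.card α :=
    finrank_range_funLeft_sub_one_add_cycles ℚ p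
  have rank_q : finrank ℚ (range (Q - 1)) + cycles q = Nat.card α :=
    finrank_range_funLeft_sub_one_add_cycles ℚ q
  omega

theorem card_le_two_mul_cycles {σ : α → α} (hσ : Function.Involutive σ) :
    Nat.card α ≤ 2 * cycles σ := by
  -- In characteristic two, `S ^ 2 = 1` gives `(S - 1) ^ 2 = 0`.
  let S : End (ZMod 2) (α → ZMod 2) := funLeft (ZMod 2) (ZMod 2) σ
  have range_le_ker : range (S - 1) ≤ ker (S - 1) := by
    rintro _ ⟨f, rfl⟩
    rw [mem_ker_funLeft_sub_one]
    intro i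
    simp [S, funLeft_apply, hσ i, CharTwo.sub_eq_add, add_comm]
  have rank_le := Submodule.finrank_mono range_le_ker
  rw [finrank_ker_funLeft_sub_one] at rank_le
  have rank_nullity : finrank (ZMod 2) (range (S - 1)) + cycles σ = Nat.card α :=
    finrank_range_funLeft_sub_one_add_cycles (ZMod 2) σ
  omega

end Cycles

theorem rot_injective (n : ℕ) : Function.Injective (rot n) :=
  add_left_injective 1

theorem jointCycles_rot (n : ℕ) (σ : ZMod (2 * n) → ZMod (2 * n)) :
    jointCycles (rot n) σ = 1 := by
  let mk : ZMod (2 * n) → Quot fun i j => rot n i = j ∨ σ i = j := Quot.mk _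
  have mk_succ (i : ZMod (2 * n)) : mk (i + 1) = mk i := Eq.symm (Quot.sound (.inl rfl))
  have mk_intCast (k : ℤ) : mk k = mk 0 := by
    induction k with
    | zero => simp
    | succ k ih => rw [← ih]; simpa using mk_succ k
    | pred k ih => rw [← ih]; simpa using (mk_succ (-k - 1)).symm
  refine (Nat.card_eq_one_iff_exists).2 ⟨mk 0, ?_⟩
  rintro ⟨i⟩
  obtain ⟨k, rfl⟩ := ZMod.intCast_surjective i
  exact mk_intCast k

section RestrictTo

variable {α : Type*} {σ : α → α} {A : Set α}

theorem apply_mem_iff_of_involutive (hσ : Function.Involutive σ) (hA : ∀ i ∈ A, σ i ∈ A) {i : α} :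
    σ i ∈ A ↔ i ∈ A :=
  ⟨fun hi => hσ i ▸ hA _ hi, hA i⟩

theorem restrictTo_involutive_s10 (hσ : Function.Involutive σ) (hA : ∀ i ∈ A, σ i ∈ A) :
    Function.Involutive (restrictTo σ A) := by
  intro i
  by_cases hi : i ∈ A <;> simp [restrictTo, hi, hA, hσ i]

theorem restrictTo_comp_self (hσ : Function.Involutive σ) (hA : ∀ i ∈ A, σ i ∈ A) :
    restrictTo σ A ∘ σ = restrictTo σ Aᶜ := by
  ext i
  by_cases hi : i ∈ A <;> simp [restrictTo, hi, apply_mem_iff_of_involutive hσ hA, hσ i]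

theorem jointCycles_comp_restrictTo_le [Finite α] (r : α → α) (hσ : Function.Involutive σ)
    (hA : ∀ i ∈ A, σ i ∈ A) :
    jointCycles (r ∘ restrictTo σ A) σ ≤ jointCycles r σ := by
  let mk : α → Quot fun i j => (r ∘ restrictTo σ A) i = j ∨ σ i = j := Quot.mk _
  have mk_apply (i : α) : mk (σ i) = mk i := Eq.symm (Quot.sound (.inr rfl))
  have mk_restrictTo (i : α) : mk (restrictTo σ A i) = mk i := by
    by_cases hi : i ∈ A <;> simp only [restrictTo, hi, if_true, if_false, mk_apply]
  have mk_comp (i : α) : mk (r (restrictTo σ A i)) = mk i := Eq.symm (Quot.sound (.inl rfl))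
  have mk_r (i : α) : mk (r i) = mk i := by
    rw [← mk_restrictTo i, ← mk_comp (restrictTo σ A i), restrictTo_involutive_s10 hσ hA]
  have mk_eq (i j : α) (hij : r i = j ∨ σ i = j) : mk i = mk j := by
    obtain rfl | rfl := hij
    exacts [(mk_r i).symm, (mk_apply i).symm]
  have lift_surjective : Function.Surjective (Quot.lift mk mk_eq) := by
    rintro ⟨i⟩
    exact ⟨Quot.mk _ i, rfl⟩
  exact Nat.card_le_card_of_surjective _ lift_surjective

end RestrictTo

theorem partial_dual_cycles_le_general {α : Type*} [Finite α] {r σ : α → α}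
    (hr : Function.Injective r) (hσ : Function.Involutive σ) {A : Set α}
    (hA : ∀ i ∈ A, σ i ∈ A) :
    cycles (r ∘ restrictTo σ A) + cycles (r ∘ restrictTo σ Aᶜ) ≤
      Nat.card α / 2 + 2 * jointCycles r σ := by
  have euler := cycles_add_cycles_add_cycles_comp_le
    (hr.comp (restrictTo_involutive_s10 hσ hA).injective) hσ.injective
  rw [Function.comp_assoc, restrictTo_comp_self hσ hA] at euler
  have joint := jointCycles_comp_restrictTo_le r hσ hA
  have half := card_le_two_mul_cycles hσ
  omega

/-- For every chord diagram `σ` of order `n` and every set `A` of its chords,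
`c(r ∘ σ_A) + c(r ∘ σ_{Aᶜ}) ≤ n + 2`; equivalently the genus `g_A(σ)` of the partial
dual of `σ` relative to `A` is nonnegative. -/
theorem partial_dual_cycles_le (n : ℕ) (hn : 0 < n)
    (σ : ZMod (2 * n) → ZMod (2 * n))
    (hinv : Function.Involutive σ) (hfpf : ∀ i, σ i ≠ i)
    (A : Set (ZMod (2 * n))) (hA : ∀ i ∈ A, σ i ∈ A) :
    cycles (rot n ∘ restrictTo σ A) + cycles (rot n ∘ restrictTo σ Aᶜ) ≤ n + 2 := by
  have : NeZero (2 * n) := ⟨by omega⟩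
  simpa [jointCycles_rot] using partial_dual_cycles_le_general (rot_injective n) hinv hA
end
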